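/- Let F_* : ℝ² → ℝ² be defined by F_*(x,y) = (x + (1/2)·sin(2π(y + (1/2)·sin(2πx))), y + (1/2)·sin(2πx)). Then F_* is a lift of a homeomorphism of the two-torus homotopic to the identity; the points (1/4,0), (0,1/4), (3/4,0), (0,3/4) satisfy F_*²(1/4,0) = (1/4,0) + (0,1), F_*²(0,1/4) = (0,1/4) + (1,0), F_*²(3/4,0) = (3/4,0) + (0,−1), F_*²(0,3/4) = (0,3/4) + (−1,0), so that (0,1/2), (1/2,0), (0,−1/2), (−1/2,0) ∈ ρ(F_*); and consequently, since ρ(F_*) is convex, the square Q = {(x,y) ∈ ℝ² : |x| + |y| ≤ 1/2} is contained in ρ(F_*). -/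

import Mathlib

noncomputable section
open Filter Topology Metric Set MeasureTheory

/-- Euclidean space `ℝ^d`. -/
abbrev E (d : ℕ) := EuclideanSpace ℝ (Fin d)

/-- The integer lattice `ℤ^d` as an additive subgroup of `ℝ^d`. -/
def ZLat (d : ℕ) : AddSubgroup (E d) where
  carrier := {z | ∀ i, ∃ m : ℤ, z i = (m : ℝ)}
  zero_mem' := fun i => ⟨0, by simp⟩
  add_mem' := by
    intro x y hx hy i
    obtain ⟨m, hm⟩ := hx i
    obtain ⟨n, hn⟩ := hy i
    exact ⟨m + n, by simp [PiLp.add_apply, hm, hn]⟩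
  neg_mem' := by
    intro x hx i
    obtain ⟨m, hm⟩ := hx i
    exact ⟨-m, by simp [PiLp.neg_apply, hm]⟩

/-- The torus `T^d = ℝ^d / ℤ^d`. -/
abbrev T (d : ℕ) := E d ⧸ ZLat d

/-- The canonical projection `π : ℝ^d → T^d`. -/
def tpi (d : ℕ) : E d → T d := QuotientAddGroup.mk

/-- The set of rotation vectors of orbit segments starting in `W ⊆ ℝ^d`:
`{ρ | ∃ nᵢ → ∞, zᵢ ∈ W, (F^{nᵢ}(zᵢ) - zᵢ)/nᵢ → ρ}`. -/
def rotRel {d : ℕ} (F : E d → E d) (W : Set (E d)) : Set (E d) :=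
  {ρ | ∃ (n : ℕ → ℕ) (z : ℕ → E d),
    Tendsto n atTop atTop ∧ (∀ i, z i ∈ W) ∧
    Tendsto (fun i => (n i : ℝ)⁻¹ • (F^[n i] (z i) - z i)) atTop (𝓝 ρ)}

/-- The Misiurewicz–Ziemian rotation set `ρ(F)` of a lift `F`. -/
def rotSet {d : ℕ} (F : E d → E d) : Set (E d) := rotRel F Set.univ

/-- The rotation subset `ρ_U(F)` for `U ⊆ T^d` (starting points in `π⁻¹(U)`). -/
def rotU {d : ℕ} (F : E d → E d) (U : Set (T d)) : Set (E d) :=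
  rotRel F (tpi d ⁻¹' U)

/-- `F` is a lift of the torus homeomorphism `f` (which is then homotopic to the
identity, as expressed by commutation with the deck translations). -/
def IsLift {d : ℕ} (F : E d ≃ₜ E d) (f : T d ≃ₜ T d) : Prop :=
  (∀ z : E d, tpi d (F z) = f (tpi d z)) ∧ ∀ z : E d, ∀ m ∈ ZLat d, F (z + m) = F z + m

/-- `U ⊆ T^d` is bounded: the connected components of `π⁻¹(U)` are bounded. -/
def BoundedSet {d : ℕ} (U : Set (T d)) : Prop :=
  ∀ z ∈ tpi d ⁻¹' U, Bornology.IsBounded (connectedComponentIn (tpi d ⁻¹' U) z)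

/-- `U ⊆ T^d` is recurrent: `f^n(U) ∩ U ≠ ∅` for infinitely many `n ≥ 1`. -/
def Recurrent {d : ℕ} (f : T d ≃ₜ T d) (U : Set (T d)) : Prop :=
  {n : ℕ | 1 ≤ n ∧ ((⇑f)^[n] '' U ∩ U).Nonempty}.Infinite

open Real

/-- The point `(a, b) ∈ ℝ²`. -/
def pt (a b : ℝ) : E 2 := (WithLp.equiv 2 (Fin 2 → ℝ)).symm ![a, b]

/-- The lift `F_*(x,y) = (x + ½ sin(2π(y + ½ sin(2πx))), y + ½ sin(2πx))`. -/
def Fstar : E 2 → E 2 := fun z =>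
  pt (z 0 + (1 / 2) * Real.sin (2 * π * (z 1 + (1 / 2) * Real.sin (2 * π * z 0))))
     (z 1 + (1 / 2) * Real.sin (2 * π * z 0))


set_option linter.unusedSimpArgs false

lemma sin_pos_range (φ : ℝ → ℝ) (hc : Continuous φ) (hs : ∀ s ∈ Ioo (0:ℝ) 1, 0 < Real.sin (φ s)) :
    ∃ k : ℤ, ∀ s ∈ Icc (0:ℝ) 1, φ s - k * (2 * π) ∈ Icc 0 π := by
  have hpi := Real.pi_pos
  set k : ℤ := ⌊φ (1/2) / (2 * π)⌋ with hk
  have h1 : (k:ℝ) ≤ φ (1/2) / (2 * π) := Int.floor_le _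
  have h2 : φ (1/2) / (2 * π) < k + 1 := Int.lt_floor_add_one _
  rw [le_div_iff₀ (by positivity)] at h1
  rw [div_lt_iff₀ (by positivity)] at h2
  have hmid : φ (1/2) - k * (2*π) < π := by
    by_contra h
    push Not at h
    have h3 := hs (1/2) (by norm_num)
    have h4 : Real.sin (φ (1/2) - k * (2*π)) = Real.sin (φ (1/2)) := Real.sin_sub_int_mul_two_pi _ _
    have h5 : Real.sin (φ (1/2) - k * (2*π) - 2 * π) ≤ 0 :=
      Real.sin_nonpos_of_nonpos_of_neg_pi_le (by linarith) (by linarith)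
    rw [Real.sin_sub_two_pi] at h5
    linarith
  have hoc : (φ '' Ioo (0:ℝ) 1).OrdConnected :=
    (isPreconnected_Ioo.image _ hc.continuousOn).ordConnected
  have hm : φ (1/2) ∈ φ '' Ioo (0:ℝ) 1 := ⟨1/2, by norm_num, rfl⟩
  have hin : ∀ s ∈ Ioo (0:ℝ) 1, φ s - k * (2 * π) ∈ Icc 0 π := by
    intro s hs'
    have hms : φ s ∈ φ '' Ioo (0:ℝ) 1 := ⟨s, hs', rfl⟩
    constructor
    · by_contra h
      push Not at h
      obtain ⟨u, hu, hu'⟩ := hoc.out hms hm (show (k * (2*π) : ℝ) ∈ _ from ⟨by linarith, by linarith⟩)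
      have := hs u hu
      rw [hu', show (k * (2*π) : ℝ) = ((2 * k : ℤ) : ℝ) * π by push_cast; ring, Real.sin_int_mul_pi] at this
      exact lt_irrefl _ this
    · by_contra h
      push Not at h
      obtain ⟨u, hu, hu'⟩ := hoc.out hm hms (show (k * (2*π) + π : ℝ) ∈ _ from ⟨by linarith, by linarith⟩)
      have := hs u hu
      rw [hu', show (k * (2*π) + π : ℝ) = ((2 * k + 1 : ℤ) : ℝ) * π by push_cast; ring, Real.sin_int_mul_pi] at this
      exact lt_irrefl _ this
  refine ⟨k, ?_⟩
  have hcl : IsClosed {s | φ s - k * (2 * π) ∈ Icc 0 π} := isClosed_Icc.preimage (by fun_prop)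
  have := hcl.closure_subset_iff.2 (show Ioo (0:ℝ) 1 ⊆ _ from hin)
  rwa [closure_Ioo (by norm_num)] at this

lemma sin_pos_drop (φ : ℝ → ℝ) (hc : Continuous φ) (hs : ∀ s ∈ Ioo (0:ℝ) 1, 0 < Real.sin (φ s))
    (h0 : Real.cos (φ 0) = -1) (h1 : Real.cos (φ 1) = 1) : φ 1 = φ 0 - π := by
  obtain ⟨k, hk⟩ := sin_pos_range φ hc hs
  have a := hk 0 (by norm_num)
  have b := hk 1 (by norm_num)
  have a' : φ 0 - k * (2*π) = π := by
    apply Real.injOn_cos a ⟨Real.pi_pos.le, le_rfl⟩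
    rw [Real.cos_sub_int_mul_two_pi, h0, Real.cos_pi]
  have b' : φ 1 - k * (2*π) = 0 := by
    apply Real.injOn_cos b ⟨le_rfl, Real.pi_pos.le⟩
    rw [Real.cos_sub_int_mul_two_pi, h1, Real.cos_zero]
  linarith

lemma sin_zero_le (φ : ℝ → ℝ) (hc : Continuous φ) (hs : ∀ s ∈ Icc (0:ℝ) 1, Real.sin (φ s) = 0) :
    φ 1 ≤ φ 0 := by
  by_contra h
  push Not at h
  set δ := min (φ 1 - φ 0) 1 with hδ
  have hd : 0 < δ := lt_min (by linarith) one_pos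
  have hd1 : δ ≤ 1 := min_le_right _ _
  have hd2 : δ ≤ φ 1 - φ 0 := min_le_left _ _
  obtain ⟨u, hu, hu'⟩ := intermediate_value_Icc (zero_le_one (α := ℝ)) hc.continuousOn
    (show φ 0 + δ ∈ Icc (φ 0) (φ 1) from ⟨by linarith, by linarith⟩)
  have h1 := hs u hu
  rw [hu', Real.sin_add, hs 0 (by norm_num), zero_mul, zero_add] at h1
  have h2 := Real.sin_sq_add_cos_sq (φ 0)
  rw [hs 0 (by norm_num)] at h2
  have h3 : 0 < Real.sin δ := Real.sin_pos_of_pos_of_lt_pi hd (by linarith [Real.pi_gt_three])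
  rcases mul_eq_zero.1 h1 with h | h
  · rw [h] at h2; norm_num at h2
  · linarith

lemma sin_zero_const (φ : ℝ → ℝ) (hc : Continuous φ) (hs : ∀ s ∈ Icc (0:ℝ) 1, Real.sin (φ s) = 0) :
    φ 1 = φ 0 := by
  apply le_antisymm (sin_zero_le φ hc hs)
  have := sin_zero_le (fun s => - φ s) hc.neg (fun s h => by simp [hs s h])
  linarith

/-- Universal chord lemma for arches. -/
lemma chord_arch (g f : ℝ → ℝ) (hg : Continuous g) (hf : Continuous f) (m : ℝ) (hm : 0 < m)
    (f0 : f 0 = 0) (f1 : f 1 = 0) (hpos : ∀ s ∈ Ioo (0:ℝ) 1, 0 < f s) (hlen : m < g 1 - g 0) :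
    ∃ s ∈ Icc (0:ℝ) 1, ∃ t ∈ Icc (0:ℝ) 1, f s = f t ∧ g s - g t = m := by
  by_contra hne
  push Not at hne
  let c : ℝ → ℝ := fun s => max 0 (min 1 s)
  have hcc : Continuous c := by fun_prop
  have hc01 : ∀ s, c s ∈ Icc (0:ℝ) 1 := fun s => ⟨le_max_left _ _, max_le zero_le_one (min_le_left _ _)⟩
  have hcid : ∀ s ∈ Icc (0:ℝ) 1, c s = s := fun s hs => by
    simp [c, min_eq_right hs.2, max_eq_right hs.1]
  have hcm : ∀ s r, c s * c r ∈ Icc (0:ℝ) 1 := fun s r =>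
    ⟨mul_nonneg (hc01 s).1 (hc01 r).1, mul_le_one₀ (hc01 s).2 (hc01 r).1 (hc01 r).2⟩
  let H : C(ℝ × ℝ, ℂ) := ⟨fun p => ((g (c p.1) - g (c p.1 * c p.2) - m : ℝ) : ℂ) +
    ((f (c p.1) - f (c p.1 * c p.2) : ℝ) : ℂ) * Complex.I, by fun_prop⟩
  have Hre : ∀ p, (H p).re = g (c p.1) - g (c p.1 * c p.2) - m := fun p => by simp [H]
  have Him : ∀ p, (H p).im = f (c p.1) - f (c p.1 * c p.2) := fun p => by simp [H]
  have hH : ∀ p, H p ≠ 0 := by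
    intro p hp
    apply hne (c p.1) (hc01 _) (c p.1 * c p.2) (hcm _ _)
    · have := Him p; rw [hp] at this; simp at this; linarith
    · have := Hre p; rw [hp] at this; simp at this; linarith
  obtain ⟨L, ⟨-, hL⟩, -⟩ := Complex.isCoveringMapOn_exp.existsUnique_continuousMap_lifts H
    (Complex.exp_log (hH ((0:ℝ),(0:ℝ)))) (fun p => hH p)
  have hL' : ∀ p, Complex.exp (L p) = H p := fun p => congrFun hL p
  have Lre : ∀ p, Real.exp (L p).re * Real.cos (L p).im = g (c p.1) - g (c p.1 * c p.2) - m := by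
    intro p; rw [← Hre, ← hL', Complex.exp_re]
  have Lim : ∀ p, Real.exp (L p).re * Real.sin (L p).im = f (c p.1) - f (c p.1 * c p.2) := by
    intro p; rw [← Him, ← hL', Complex.exp_im]
  have hcL : Continuous fun p => (L p).im := Complex.continuous_im.comp L.continuous
  have c0 : c 0 = 0 := hcid 0 (by norm_num)
  have c1 : c 1 = 1 := hcid 1 (by norm_num)
  have cosval : ∀ p, Real.sin (L p).im = 0 →
      (0 < Real.exp (L p).re * Real.cos (L p).im → Real.cos (L p).im = 1) ∧
      (Real.exp (L p).re * Real.cos (L p).im < 0 → Real.cos (L p).im = -1) := by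
    intro p hp
    have h2 := Real.sin_sq_add_cos_sq (L p).im
    rw [hp] at h2
    have he := Real.exp_pos (L p).re
    rcases mul_self_eq_one_iff.1 (show Real.cos (L p).im * Real.cos (L p).im = 1 by nlinarith) with h | h <;>
    · rw [h]; constructor <;> intro <;> first | rfl | linarith
  have sinz : ∀ p, f (c p.1) - f (c p.1 * c p.2) = 0 → Real.sin (L p).im = 0 := by
    intro p hp
    have := Lim p
    rw [hp] at this
    exact (mul_eq_zero.1 this).resolve_left (Real.exp_pos _).ne'
  have s00 : Real.cos (L (0,0)).im = -1 :=
    (cosval _ (sinz _ (by simp [c0]))).2 (by rw [Lre]; simp [c0]; linarith)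
  have s10 : Real.cos (L (1,0)).im = 1 :=
    (cosval _ (sinz _ (by simp [c0, c1, f0, f1]))).1 (by rw [Lre]; simp [c0, c1]; linarith)
  have s11 : Real.cos (L (1,1)).im = -1 :=
    (cosval _ (sinz _ (by simp [c1]))).2 (by rw [Lre]; simp [c1]; linarith)
  have e1 := sin_pos_drop (fun s => (L (s,0)).im) (hcL.comp (by fun_prop)) (by
    intro s hs
    have h := Lim (s,0)
    have := hpos s hs
    simp only [c0, hcid s (Ioo_subset_Icc_self hs), mul_zero, f0] at h
    exact pos_of_mul_pos_right (by rw [h]; linarith) (Real.exp_pos _).le) s00 s10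
  have e2 := sin_pos_drop (fun r => (L (1,r)).im + π) ((hcL.comp (by fun_prop)).add continuous_const) (by
    intro s hs
    have h := Lim (1,s)
    have := hpos s hs
    simp only [c1, hcid s (Ioo_subset_Icc_self hs), one_mul, f1] at h
    simp only [Real.sin_add_pi]
    apply pos_of_mul_pos_right (a := Real.exp (L (1,s)).re) _ (Real.exp_pos _).le
    rw [mul_neg, h]; linarith) (by simp [s10]) (by simp [s11])
  have e3 := sin_zero_const (fun r => (L (0,r)).im) (hcL.comp (by fun_prop)) (by
    intro s hs; exact sinz _ (by simp [c0]))
  have e4 := sin_zero_const (fun r => (L (r,1)).im) (hcL.comp (by fun_prop)) (by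
    intro s hs; exact sinz _ (by simp [c1]))
  linarith [Real.pi_pos]

lemma gap_path (g f : ℝ → ℝ) (hg : Continuous g) (hf : Continuous f) (m : ℝ) (hm : 0 < m) (v h : ℝ)
    (f0 : f 0 = h) (f1 : f 1 = h) (g0 : g 0 < v) (g1 : v < g 1)
    (hnc : ∀ s ∈ Icc (0:ℝ) 1, ∀ t ∈ Icc (0:ℝ) 1, f s = f t → g s - g t ≠ m) :
    ∃ s ∈ Icc (0:ℝ) 1, f s = h ∧ |g s - v| ≤ m := by
  by_contra hcon
  push Not at hcon
  have hsplit : ∀ s ∈ Icc (0:ℝ) 1, f s = h → g s ≤ v - m ∨ v + m ≤ g s := by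
    intro s hs hfs
    rcases lt_abs.1 (hcon s hs hfs) with h | h
    · right; linarith
    · left; linarith
  have hBc : IsCompact (Icc (0:ℝ) 1 ∩ ({s | f s = h} ∩ {s | v + m ≤ g s})) :=
    isCompact_Icc.inter_right ((isClosed_eq hf continuous_const).inter
      (isClosed_le continuous_const hg))
  obtain ⟨t2, ⟨ht2, ht2f, ht2g⟩, ht2l⟩ := hBc.exists_isLeast ⟨1, by norm_num, f1, by
    rcases hsplit 1 (by norm_num) f1 with h | h
    · linarith
    · exact h⟩
  have hAc : IsCompact (Icc (0:ℝ) t2 ∩ ({s | f s = h} ∩ {s | g s ≤ v - m})) :=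
    isCompact_Icc.inter_right ((isClosed_eq hf continuous_const).inter
      (isClosed_le hg continuous_const))
  obtain ⟨t1, ⟨ht1, ht1f, ht1g⟩, ht1l⟩ := hAc.exists_isGreatest ⟨0, ⟨le_rfl, ht2.1⟩, f0, by
    rcases hsplit 0 (by norm_num) f0 with h | h
    · exact h
    · linarith⟩
  simp only [mem_ofPred_eq] at ht2f ht2g ht1f ht1g
  have hlt : t1 < t2 := by
    rcases ht1.2.lt_or_eq with h | h
    · exact h
    · rw [h] at ht1g; linarith
  have hno : ∀ s ∈ Ioo t1 t2, f s ≠ h := by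
    intro s hs hfs
    have hs01 : s ∈ Icc (0:ℝ) 1 := ⟨ht1.1.trans hs.1.le, hs.2.le.trans ht2.2⟩
    rcases hsplit s hs01 hfs with h | h
    · exact absurd (ht1l ⟨⟨hs01.1, hs.2.le⟩, hfs, h⟩) (not_le.2 hs.1)
    · exact absurd (ht2l ⟨hs01, hfs, h⟩) (not_le.2 hs.2)
  have hmap : ∀ s ∈ Icc (0:ℝ) 1, t1 + (t2 - t1) * s ∈ Icc (0:ℝ) 1 := by
    intro s hs
    constructor
    · have := mul_nonneg (sub_pos.2 hlt).le hs.1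
      linarith [ht1.1]
    · have := mul_le_mul_of_nonneg_left hs.2 (sub_pos.2 hlt).le
      linarith [ht2.2]
  have hmapo : ∀ s ∈ Ioo (0:ℝ) 1, t1 + (t2 - t1) * s ∈ Ioo t1 t2 := by
    intro s hs
    constructor
    · have := mul_pos (sub_pos.2 hlt) hs.1
      linarith
    · have := mul_lt_mul_of_pos_left hs.2 (sub_pos.2 hlt)
      linarith
  have hoc : (f '' Ioo t1 t2).OrdConnected :=
    (isPreconnected_Ioo.image _ hf.continuousOn).ordConnected
  have hsign : (∀ s ∈ Ioo t1 t2, h < f s) ∨ (∀ s ∈ Ioo t1 t2, f s < h) := by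
    by_contra hcon2
    push Not at hcon2
    obtain ⟨⟨a, ha, ha'⟩, b, hb, hb'⟩ := hcon2
    obtain ⟨u, hu, hu'⟩ := hoc.out ⟨a, ha, rfl⟩ ⟨b, hb, rfl⟩ ⟨ha', hb'⟩
    exact hno u hu hu'
  have e0 : t1 + (t2 - t1) * 0 = t1 := by ring
  have e1 : t1 + (t2 - t1) * 1 = t2 := by ring
  rcases hsign with hs | hs
  · obtain ⟨s, hs1, t, ht, hft, hgt⟩ := chord_arch (fun s => g (t1 + (t2 - t1) * s))
      (fun s => f (t1 + (t2 - t1) * s) - h) (by fun_prop) (by fun_prop) m hm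
      (by simp only [e0]; linarith) (by simp only [e1]; linarith)
      (fun s h' => sub_pos.2 (hs _ (hmapo s h'))) (by simp only [e0, e1]; linarith)
    exact hnc _ (hmap s hs1) _ (hmap t ht) (by linarith) hgt
  · obtain ⟨s, hs1, t, ht, hft, hgt⟩ := chord_arch (fun s => g (t1 + (t2 - t1) * s))
      (fun s => h - f (t1 + (t2 - t1) * s)) (by fun_prop) (by fun_prop) m hm
      (by simp only [e0]; linarith) (by simp only [e1]; linarith)
      (fun s h' => sub_pos.2 (hs _ (hmapo s h'))) (by simp only [e0, e1]; linarith)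
    exact hnc _ (hmap s hs1) _ (hmap t ht) (by linarith) hgt

lemma gap_set (S : Set (E 2)) (hS : Convex ℝ S) (g f : E 2 → ℝ) (hg : Continuous g)
    (hf : Continuous f) (m : ℝ) (hm : 0 < m) (v h : ℝ) (x y : E 2) (hx : x ∈ S) (hy : y ∈ S)
    (fx : f x = h) (fy : f y = h) (gx : g x < v) (gy : v < g y)
    (hnc : ∀ s ∈ S, ∀ t ∈ S, f s = f t → g s - g t ≠ m) :
    ∃ s ∈ S, f s = h ∧ |g s - v| ≤ m := by
  have hl : Continuous fun s : ℝ => AffineMap.lineMap x y s := AffineMap.lineMap_continuous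
  have hmem : ∀ s ∈ Icc (0:ℝ) 1, AffineMap.lineMap x y s ∈ S := fun s hs => hS.lineMap_mem hx hy hs
  obtain ⟨s, hs, h1, h2⟩ := gap_path (fun s => g (AffineMap.lineMap x y s))
    (fun s => f (AffineMap.lineMap x y s)) (hg.comp hl) (hf.comp hl) m hm v h (by simpa using fx)
    (by simpa using fy) (by simpa using gx) (by simpa using gy)
    (fun s hs t ht => hnc _ (hmem s hs) _ (hmem t ht))
  exact ⟨_, hmem s hs, h1, h2⟩

lemma quad_zero (S : Set (E 2)) (hS : Convex ℝ S) (a b : E 2 → ℝ) (ha : Continuous a)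
    (hb : Continuous b) (x y : E 2) (hx : x ∈ S) (hy : y ∈ S) (ax : 0 < a x) (bx : 0 < b x)
    (hneg : a y < 0 ∨ b y < 0) : ∃ z ∈ S, (a z = 0 ∧ 0 ≤ b z) ∨ (b z = 0 ∧ 0 ≤ a z) := by
  have hoc : ((fun z => min (a z) (b z)) '' S).OrdConnected :=
    (hS.isPreconnected.image _ (ha.min hb).continuousOn).ordConnected
  obtain ⟨z, hz, hz'⟩ := hoc.out ⟨y, hy, rfl⟩ ⟨x, hx, rfl⟩ (show (0:ℝ) ∈ _ from
    ⟨by rcases hneg with h | h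
        · exact (min_le_left _ _).trans h.le
        · exact (min_le_right _ _).trans h.le, (lt_min ax bx).le⟩)
  refine ⟨z, hz, ?_⟩
  simp only at hz'
  rcases le_total (a z) (b z) with h | h
  · rw [min_eq_left h] at hz'; left; exact ⟨hz', by linarith⟩
  · rw [min_eq_right h] at hz'; right; exact ⟨hz', by linarith⟩

lemma key_dense (S : Set (E 2)) (hS : Convex ℝ S) (X Y : E 2 → ℝ) (hX : Continuous X)
    (hY : Continuous Y)
    (hnc : ∀ x ∈ S, ∀ y ∈ S, ∀ a b : ℤ, X x - X y = a → Y x - Y y = b → a = 0 ∧ b = 0)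
    (k v w : ℝ) (hvw : |v| + |w| ≤ k - 5) (p q p' q' : E 2) (hp : p ∈ S) (hq : q ∈ S)
    (hp' : p' ∈ S) (hq' : q' ∈ S) (Xp : X p = 1/4) (Yp : Y p = k) (Xq : X q = k) (Yq : Y q = 1/4)
    (Xp' : X p' = -(1/4)) (Yp' : Y p' = -k) (Xq' : X q' = -k) (Yq' : Y q' = -(1/4)) :
    ∃ z ∈ S, |X z - v| ≤ 1 ∧ |Y z - w| ≤ 1 := by
  have b1 := le_abs_self v
  have b2 := neg_abs_le v
  have b3 := le_abs_self w
  have b4 := neg_abs_le w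
  have edgeP : ∀ x ∈ S, ∀ y ∈ S, Y x + X x = Y y + X y → X x - X y ≠ 1 := by
    intro x hx y hy h1 h2
    have := hnc x hx y hy 1 (-1) (by push_cast; linarith) (by push_cast; linarith)
    omega
  have edgeM : ∀ x ∈ S, ∀ y ∈ S, Y x - X x = Y y - X y → X x - X y ≠ 1 := by
    intro x hx y hy h1 h2
    have := hnc x hx y hy 1 1 (by push_cast; linarith) (by push_cast; linarith)
    omega
  by_contra hcon
  push Not at hcon
  have hor : (∀ z ∈ S, Y z = w → X z < v) ∨ (∀ z ∈ S, Y z = w → v < X z) := by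
    by_contra h
    push Not at h
    obtain ⟨⟨y, hy, hy1, hy2⟩, x, hx, hx1, hx2⟩ := h
    have hne : ∀ z ∈ S, Y z = w → X z ≠ v := fun z hz h1 h2 =>
      absurd (hcon z hz (by simp [h2])) (by simp [h1])
    obtain ⟨z, hz, h1, h2⟩ := gap_set S hS X Y hX hY 1 one_pos v w x y hx hy hx1 hy1
      (lt_of_le_of_ne hx2 (hne x hx hx1)) (lt_of_le_of_ne hy2 (hne y hy hy1).symm) (by
        intro x hx y hy h1 h2
        have := hnc x hx y hy 1 0 (by push_cast; linarith) (by push_cast; linarith)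
        omega)
    exact absurd (hcon z hz h2) (by simp [h1])
  have ver : (∀ z ∈ S, X z = v → Y z < w) ∨ (∀ z ∈ S, X z = v → w < Y z) := by
    by_contra h
    push Not at h
    obtain ⟨⟨y, hy, hy1, hy2⟩, x, hx, hx1, hx2⟩ := h
    have hne : ∀ z ∈ S, X z = v → Y z ≠ w := fun z hz h1 h2 =>
      absurd (hcon z hz (by simp [h1])) (by simp [h2])
    obtain ⟨z, hz, h1, h2⟩ := gap_set S hS Y X hY hX 1 one_pos w v x y hx hy hx1 hy1
      (lt_of_le_of_ne hx2 (hne x hx hx1)) (lt_of_le_of_ne hy2 (hne y hy hy1).symm) (by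
        intro x hx y hy h1 h2
        have := hnc x hx y hy 0 1 (by push_cast; linarith) (by push_cast; linarith)
        omega)
    have := hcon z hz (by simp [h1])
    linarith
  rcases hor with hh | hh <;> rcases ver with hv | hv
  · -- free rays: right and up
    obtain ⟨e, he, e1, e2⟩ := gap_set S hS X (fun z => Y z + X z) hX (by fun_prop) 1 one_pos
      ((v + (k + 1/4 - w)) / 2) (k + 1/4) p q hp hq (by linarith) (by linarith) (by linarith)
      (by linarith) edgeP
    obtain ⟨e2, e3⟩ := abs_le.1 e2
    obtain ⟨z, hz, ⟨z1, z2⟩ | ⟨z1, z2⟩⟩ := quad_zero S hS (fun z => X z - v) (fun z => Y z - w)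
      (by fun_prop) (by fun_prop) e p' he hp' (by linarith) (by linarith) (by right; linarith)
    · have := hv z hz (by linarith); linarith
    · have := hh z hz (by linarith); linarith
  · -- free rays: right and down
    obtain ⟨e, he, e1, e2⟩ := gap_set S hS X (fun z => Y z - X z) hX (by fun_prop) 1 one_pos
      ((v + (w + k - 1/4)) / 2) (1/4 - k) p' q hp' hq (by linarith) (by linarith) (by linarith)
      (by linarith) edgeM
    obtain ⟨e2, e3⟩ := abs_le.1 e2
    obtain ⟨z, hz, ⟨z1, z2⟩ | ⟨z1, z2⟩⟩ := quad_zero S hS (fun z => X z - v) (fun z => w - Y z)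
      (by fun_prop) (by fun_prop) e p he hp (by linarith) (by linarith) (by right; linarith)
    · have := hv z hz (by linarith); linarith
    · have := hh z hz (by linarith); linarith
  · -- free rays: left and up
    obtain ⟨e, he, e1, e2⟩ := gap_set S hS X (fun z => Y z - X z) hX (by fun_prop) 1 one_pos
      ((v + (w - k + 1/4)) / 2) (k - 1/4) q' p hq' hp (by linarith) (by linarith) (by linarith)
      (by linarith) edgeM
    obtain ⟨e2, e3⟩ := abs_le.1 e2
    obtain ⟨z, hz, ⟨z1, z2⟩ | ⟨z1, z2⟩⟩ := quad_zero S hS (fun z => v - X z) (fun z => Y z - w)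
      (by fun_prop) (by fun_prop) e p' he hp' (by linarith) (by linarith) (by right; linarith)
    · have := hv z hz (by linarith); linarith
    · have := hh z hz (by linarith); linarith
  · -- free rays: left and down
    obtain ⟨e, he, e1, e2⟩ := gap_set S hS X (fun z => Y z + X z) hX (by fun_prop) 1 one_pos
      ((v + (-k - 1/4 - w)) / 2) (-k - 1/4) q' p' hq' hp' (by linarith) (by linarith) (by linarith)
      (by linarith) edgeP
    obtain ⟨e2, e3⟩ := abs_le.1 e2
    obtain ⟨z, hz, ⟨z1, z2⟩ | ⟨z1, z2⟩⟩ := quad_zero S hS (fun z => v - X z) (fun z => w - Y z)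
      (by fun_prop) (by fun_prop) e p he hp (by linarith) (by linarith) (by right; linarith)
    · have := hv z hz (by linarith); linarith
    · have := hh z hz (by linarith); linarith

@[simp] lemma pt_zero (a b : ℝ) : pt a b 0 = a := rfl
@[simp] lemma pt_one (a b : ℝ) : pt a b 1 = b := rfl

lemma E2_ext {x y : E 2} (h0 : x 0 = y 0) (h1 : x 1 = y 1) : x = y := by
  ext i; fin_cases i
  · exact h0
  · exact h1

lemma pt_continuous {α : Type*} [TopologicalSpace α] {a b : α → ℝ} (ha : Continuous a)
    (hb : Continuous b) : Continuous fun x => pt (a x) (b x) := by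
  unfold pt
  refine (PiLp.continuous_toLp 2 _).comp (continuous_pi fun i => ?_)
  fin_cases i
  · exact ha
  · exact hb

lemma Fstar_zero (z : E 2) : Fstar z 0 =
    z 0 + (1 / 2) * Real.sin (2 * π * (z 1 + (1 / 2) * Real.sin (2 * π * z 0))) := rfl
lemma Fstar_one (z : E 2) : Fstar z 1 = z 1 + (1 / 2) * Real.sin (2 * π * z 0) := rfl

/-- The inverse of `Fstar`. -/
def Fsinv : E 2 → E 2 := fun z =>
  pt (z 0 - (1 / 2) * Real.sin (2 * π * z 1))
     (z 1 - (1 / 2) * Real.sin (2 * π * (z 0 - (1 / 2) * Real.sin (2 * π * z 1))))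

/-- `Fstar` as a homeomorphism of the plane. -/
def FstarHomeo : E 2 ≃ₜ E 2 where
  toFun := Fstar
  invFun := Fsinv
  left_inv z := by
    apply E2_ext <;> simp [Fsinv, Fstar]
  right_inv z := by
    apply E2_ext <;> simp [Fsinv, Fstar]
  continuous_toFun := pt_continuous (by fun_prop) (by fun_prop)
  continuous_invFun := pt_continuous (by fun_prop) (by fun_prop)

lemma Fstar_add (z : E 2) (m : E 2) (hm : m ∈ ZLat 2) : Fstar (z + m) = Fstar z + m := by
  obtain ⟨a, ha⟩ := hm 0
  obtain ⟨b, hb⟩ := hm 1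
  have h1 : Real.sin (2 * π * (z 0 + a)) = Real.sin (2 * π * z 0) := by
    rw [show 2 * π * (z 0 + a) = 2 * π * z 0 + a * (2 * π) by ring, Real.sin_add_int_mul_two_pi]
  have h2 : Fstar (z + m) 1 = Fstar z 1 + b := by
    rw [Fstar_one, Fstar_one, PiLp.add_apply, PiLp.add_apply, ha, hb, h1]; ring
  apply E2_ext
  · rw [PiLp.add_apply, Fstar_zero, Fstar_zero, ← Fstar_one, ← Fstar_one, h2, PiLp.add_apply, ha,
      show 2 * π * (Fstar z 1 + b) = 2 * π * Fstar z 1 + b * (2 * π) by ring,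
      Real.sin_add_int_mul_two_pi]
    ring
  · rw [h2, PiLp.add_apply, hb]

lemma Fsinv_add (z : E 2) (m : E 2) (hm : m ∈ ZLat 2) : Fsinv (z + m) = Fsinv z + m := by
  apply FstarHomeo.injective
  change Fstar _ = Fstar _
  rw [Fstar_add _ _ hm]
  have h := FstarHomeo.right_inv
  have h1 : Fstar (Fsinv (z + m)) = z + m := h _
  have h2 : Fstar (Fsinv z) = z := h _
  rw [h1, h2]

lemma tpi_eq_iff (x y : E 2) : tpi 2 x = tpi 2 y ↔ -x + y ∈ ZLat 2 := QuotientAddGroup.eq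

lemma tpi_resp (F : E 2 → E 2) (hF : ∀ z m, m ∈ ZLat 2 → F (z + m) = F z + m) (x y : E 2)
    (h : -x + y ∈ ZLat 2) : tpi 2 (F x) = tpi 2 (F y) := by
  rw [tpi_eq_iff]
  have := hF x _ h
  rw [add_neg_cancel_left] at this
  rw [this, neg_add_cancel_left]
  exact h

/-- Descent of an equivariant map to the torus. -/
def tdesc (F : E 2 → E 2) (hF : ∀ z m, m ∈ ZLat 2 → F (z + m) = F z + m) : T 2 → T 2 :=
  Quotient.lift (fun z => tpi 2 (F z)) (fun x y h => tpi_resp F hF x y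
    (QuotientAddGroup.leftRel_apply.1 h))

lemma tdesc_tpi (F : E 2 → E 2) (hF : ∀ z m, m ∈ ZLat 2 → F (z + m) = F z + m) (z : E 2) :
    tdesc F hF (tpi 2 z) = tpi 2 (F z) := rfl

lemma tdesc_continuous (F : E 2 → E 2) (hF : ∀ z m, m ∈ ZLat 2 → F (z + m) = F z + m)
    (hc : Continuous F) : Continuous (tdesc F hF) :=
  Continuous.quotient_lift (continuous_quotient_mk'.comp hc) _

/-- The torus homeomorphism induced by `Fstar`. -/
def fstarHomeo : T 2 ≃ₜ T 2 where
  toFun := tdesc Fstar Fstar_add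
  invFun := tdesc Fsinv Fsinv_add
  left_inv z := by
    obtain ⟨z, rfl⟩ := QuotientAddGroup.mk_surjective z
    change tpi 2 (Fsinv (Fstar z)) = tpi 2 z
    exact congrArg _ (FstarHomeo.left_inv z)
  right_inv z := by
    obtain ⟨z, rfl⟩ := QuotientAddGroup.mk_surjective z
    change tpi 2 (Fstar (Fsinv z)) = tpi 2 z
    exact congrArg _ (FstarHomeo.right_inv z)
  continuous_toFun := tdesc_continuous _ _ FstarHomeo.continuous
  continuous_invFun := tdesc_continuous _ _ FstarHomeo.symm.continuous

lemma pt_add (a b c d : ℝ) : pt a b + pt c d = pt (a + c) (b + d) := by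
  apply E2_ext <;> simp

lemma Fstar_pt (x y s t : ℝ) (hs : Real.sin (2 * π * x) = s)
    (ht : Real.sin (2 * π * (y + 1 / 2 * s)) = t) :
    Fstar (pt x y) = pt (x + 1 / 2 * t) (y + 1 / 2 * s) := by
  subst hs ht; rfl

lemma sin_q1 : Real.sin (2 * π * (1 / 4)) = 1 := by
  rw [show 2 * π * (1 / 4) = π / 2 by ring, Real.sin_pi_div_two]
lemma sin_q3 : Real.sin (2 * π * (3 / 4)) = -1 := by
  rw [show 2 * π * (3 / 4) = π / 2 + π by ring, Real.sin_add_pi, Real.sin_pi_div_two]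
lemma sin_q1' (x : ℝ) (h : x = 1 / 4) : Real.sin (2 * π * x) = 1 := by rw [h, sin_q1]
lemma sin_q3' (x : ℝ) (h : x = 3 / 4) : Real.sin (2 * π * x) = -1 := by rw [h, sin_q3]
lemma sin_half_int (x : ℝ) (n : ℤ) (h : 2 * x = n) : Real.sin (2 * π * x) = 0 := by
  rw [show 2 * π * x = (2 * x) * π by ring, h, Real.sin_int_mul_pi]

lemma per1 : Fstar^[2] (pt (1 / 4) 0) = pt (1 / 4) 0 + pt 0 1 := by
  change Fstar (Fstar _) = _
  rw [Fstar_pt _ _ 1 0 sin_q1 (sin_half_int _ 1 (by norm_num)),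
    Fstar_pt _ _ 1 0 (sin_q1' _ (by norm_num)) (sin_half_int _ 2 (by norm_num)), pt_add]
  norm_num

lemma per2 : Fstar^[2] (pt 0 (1 / 4)) = pt 0 (1 / 4) + pt 1 0 := by
  change Fstar (Fstar _) = _
  rw [Fstar_pt _ _ 0 1 (by simp) (sin_q1' _ (by norm_num)),
    Fstar_pt _ _ 0 1 (sin_half_int _ 1 (by norm_num)) (sin_q1' _ (by norm_num)), pt_add]
  norm_num

lemma per3 : Fstar^[2] (pt (3 / 4) 0) = pt (3 / 4) 0 + pt 0 (-1) := by
  change Fstar (Fstar _) = _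
  rw [Fstar_pt _ _ (-1) 0 sin_q3 (sin_half_int _ (-1) (by norm_num)),
    Fstar_pt _ _ (-1) 0 (sin_q3' _ (by norm_num)) (sin_half_int _ (-2) (by norm_num)),
    pt_add]
  norm_num

lemma per4 : Fstar^[2] (pt 0 (3 / 4)) = pt 0 (3 / 4) + pt (-1) 0 := by
  change Fstar (Fstar _) = _
  rw [Fstar_pt _ _ 0 (-1) (by simp) (sin_q3' _ (by norm_num)),
    Fstar_pt _ _ 0 (-1) (sin_half_int _ (-1) (by norm_num)) (sin_q3' _ (by norm_num)),
    pt_add]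
  norm_num

lemma pt_mem_ZLat (a b : ℤ) : pt a b ∈ ZLat 2 := by
  intro i; fin_cases i
  · exact ⟨a, rfl⟩
  · exact ⟨b, rfl⟩

lemma iter_add (n : ℕ) (z m : E 2) (hm : m ∈ ZLat 2) : Fstar^[n] (z + m) = Fstar^[n] z + m := by
  induction n generalizing z with
  | zero => rfl
  | succ n ih => rw [Function.iterate_succ_apply, Function.iterate_succ_apply, Fstar_add _ _ hm, ih]

lemma iter_per (z m : E 2) (hm : m ∈ ZLat 2) (h : Fstar^[2] z = z + m) (k : ℕ) :
    Fstar^[2 * k] z = z + (k : ℝ) • m := by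
  induction k with
  | zero => simp
  | succ k ih =>
    rw [show 2 * (k + 1) = 2 * k + 2 by ring, Function.iterate_add_apply, h, iter_add _ _ _ hm, ih]
    push_cast
    rw [add_smul, one_smul, add_assoc]

lemma per_shift (z m l : E 2) (hl : l ∈ ZLat 2) (h : Fstar^[2] z = z + m) :
    Fstar^[2] (z + l) = (z + l) + m := by
  rw [iter_add _ _ _ hl, h]; abel

/-- The small diamond. -/
def Dia : Set (E 2) := {z | |z 0| + |z 1| ≤ 1 / 4}

lemma Dia_convex : Convex ℝ Dia := by
  intro x hx y hy a b ha hb hab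
  simp only [Dia, mem_ofPred_eq, PiLp.add_apply, PiLp.smul_apply, smul_eq_mul] at *
  have h0 := abs_add_le (a * x 0) (b * y 0)
  have h1 := abs_add_le (a * x 1) (b * y 1)
  rw [abs_mul, abs_mul, abs_of_nonneg ha, abs_of_nonneg hb] at h0 h1
  have h2 := mul_le_mul_of_nonneg_left hx ha
  have h3 := mul_le_mul_of_nonneg_left hy hb
  nlinarith

lemma Dia_dense (k : ℕ) (v w : ℝ) (hvw : |v| + |w| ≤ k - 5) :
    ∃ z ∈ Dia, |Fstar^[2 * k] z 0 - v| ≤ 1 ∧ |Fstar^[2 * k] z 1 - w| ≤ 1 := by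
  have hc : Continuous (Fstar^[2 * k]) := FstarHomeo.continuous.iterate _
  have hinj : Function.Injective (Fstar^[2 * k]) := FstarHomeo.injective.iterate _
  have ip := iter_per _ _ (by simpa using pt_mem_ZLat 0 1) per1 k
  have iq := iter_per _ _ (by simpa using pt_mem_ZLat 1 0) per2 k
  have ip' := iter_per _ _ (by simpa using pt_mem_ZLat 0 (-1))
    (per_shift _ _ _ (pt_mem_ZLat (-1) 0) per3) k
  have iq' := iter_per _ _ (by simpa using pt_mem_ZLat (-1) 0)
    (per_shift _ _ _ (pt_mem_ZLat 0 (-1)) per4) k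
  refine key_dense Dia Dia_convex (fun z => Fstar^[2 * k] z 0) (fun z => Fstar^[2 * k] z 1)
    (by fun_prop) (by fun_prop) ?_ k v w hvw (pt (1/4) 0) (pt 0 (1/4))
    (pt (3/4) 0 + pt (-1 : ℤ) (0 : ℤ)) (pt 0 (3/4) + pt (0 : ℤ) (-1 : ℤ))
    ?_ ?_ ?_ ?_ ?_ ?_ ?_ ?_ ?_ ?_ ?_ ?_
  · intro x hx y hy a b h0 h1
    have hxy : x = y + pt a b := by
      apply hinj
      rw [iter_add _ _ _ (pt_mem_ZLat a b)]
      apply E2_ext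
      · simp only [PiLp.add_apply, pt_zero]; linarith
      · simp only [PiLp.add_apply, pt_one]; linarith
    have e0 : x 0 = y 0 + a := by rw [hxy]; rfl
    have e1 : x 1 = y 1 + b := by rw [hxy]; rfl
    simp only [Dia, mem_ofPred_eq] at hx hy
    have x0 := abs_le.1 (show |x 0| ≤ 1/4 by linarith [abs_nonneg (x 1)])
    have y0 := abs_le.1 (show |y 0| ≤ 1/4 by linarith [abs_nonneg (y 1)])
    have x1 := abs_le.1 (show |x 1| ≤ 1/4 by linarith [abs_nonneg (x 0)])
    have y1 := abs_le.1 (show |y 1| ≤ 1/4 by linarith [abs_nonneg (y 0)])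
    have a1 : (a:ℝ) < 1 := by linarith
    have a2 : (-1:ℝ) < a := by linarith
    have b1 : (b:ℝ) < 1 := by linarith
    have b2 : (-1:ℝ) < b := by linarith
    norm_cast at a1 b1
    have a2' : (-1:ℤ) < a := by exact_mod_cast a2
    have b2' : (-1:ℤ) < b := by exact_mod_cast b2
    omega
  · simp [Dia]
  · simp [Dia]
  · simp only [Dia, mem_ofPred_eq, PiLp.add_apply, pt_zero, pt_one]; norm_num [abs_of_neg]
  · simp only [Dia, mem_ofPred_eq, PiLp.add_apply, pt_zero, pt_one]; norm_num [abs_of_neg]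
  · simp only [ip, PiLp.add_apply, PiLp.smul_apply, pt_zero, pt_one, smul_eq_mul]; norm_num
  · simp only [ip, PiLp.add_apply, PiLp.smul_apply, pt_zero, pt_one, smul_eq_mul]; norm_num
  · simp only [iq, PiLp.add_apply, PiLp.smul_apply, pt_zero, pt_one, smul_eq_mul]; norm_num
  · simp only [iq, PiLp.add_apply, PiLp.smul_apply, pt_zero, pt_one, smul_eq_mul]; norm_num
  · simp only [ip', PiLp.add_apply, PiLp.smul_apply, pt_zero, pt_one, smul_eq_mul]; norm_num
  · simp only [ip', PiLp.add_apply, PiLp.smul_apply, pt_zero, pt_one, smul_eq_mul]; norm_num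
  · simp only [iq', PiLp.add_apply, PiLp.smul_apply, pt_zero, pt_one, smul_eq_mul]; norm_num
  · simp only [iq', PiLp.add_apply, PiLp.smul_apply, pt_zero, pt_one, smul_eq_mul]; norm_num

lemma coord_tendsto (c : ℝ) (d : ℕ → ℝ) (h : ∀ i : ℕ, |d i - 2 * i * c| ≤ 5 / 4) :
    Tendsto (fun i : ℕ => ((2 * (i + 5) : ℕ) : ℝ)⁻¹ * d i) atTop (𝓝 c) := by
  rw [tendsto_iff_norm_sub_tendsto_zero]
  have hlim : Tendsto (fun i : ℕ => (5 / 4 + 10 * |c|) * (1 / ((i : ℝ) + 1))) atTop (𝓝 0) := by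
    simpa using (tendsto_one_div_add_atTop_nhds_zero_nat (𝕜 := ℝ)).const_mul (5 / 4 + 10 * |c|)
  refine squeeze_zero (fun _ => norm_nonneg _) (fun i => ?_) hlim
  have hi : (0:ℝ) ≤ i := Nat.cast_nonneg i
  have hN : (0:ℝ) < 2 * (i + 5) := by positivity
  push_cast
  have e : (2 * ((i:ℝ) + 5))⁻¹ * d i - c = (d i - 2 * i * c - 10 * c) * (1 / (2 * (i + 5))) := by
    field_simp; ring
  rw [Real.norm_eq_abs, e, abs_mul, abs_of_pos (show 0 < 1 / (2 * ((i:ℝ) + 5)) by positivity)]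
  apply mul_le_mul
  · have := abs_sub (d i - 2 * i * c) (10 * c)
    rw [abs_mul 10 c, abs_of_pos (show (0:ℝ) < 10 by norm_num)] at this
    linarith [h i]
  · apply one_div_le_one_div_of_le <;> linarith
  · positivity
  · positivity

lemma square_subset : {z : E 2 | |z 0| + |z 1| ≤ 1 / 2} ⊆ rotSet Fstar := by
  intro ρ hρ
  simp only [mem_ofPred_eq] at hρ
  have H : ∀ i : ℕ, ∃ z ∈ Dia, |Fstar^[2 * (i + 5)] z 0 - 2 * i * ρ 0| ≤ 1 ∧
      |Fstar^[2 * (i + 5)] z 1 - 2 * i * ρ 1| ≤ 1 := by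
    intro i
    apply Dia_dense
    have hi : (0:ℝ) ≤ 2 * i := by positivity
    rw [abs_mul (2 * (i:ℝ)), abs_mul (2 * (i:ℝ)), abs_of_nonneg hi]
    push_cast
    nlinarith
  choose z hz h0 h1 using H
  refine ⟨fun i => 2 * (i + 5), z, ?_, fun _ => mem_univ _, ?_⟩
  · exact tendsto_atTop_mono (fun i => by simp only [id]; omega) tendsto_id
  have z0 : ∀ i, |z i 0| ≤ 1/4 := fun i => by
    have := hz i; simp only [Dia, mem_ofPred_eq] at this; linarith [abs_nonneg (z i 1)]
  have z1 : ∀ i, |z i 1| ≤ 1/4 := fun i => by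
    have := hz i; simp only [Dia, mem_ofPred_eq] at this; linarith [abs_nonneg (z i 0)]
  have t0 := coord_tendsto (ρ 0) (fun i => Fstar^[2 * (i + 5)] (z i) 0 - z i 0) (fun i => by
    have a := abs_le.1 (h0 i); have b := abs_le.1 (z0 i)
    rw [abs_le]; constructor <;> linarith)
  have t1 := coord_tendsto (ρ 1) (fun i => Fstar^[2 * (i + 5)] (z i) 1 - z i 1) (fun i => by
    have a := abs_le.1 (h1 i); have b := abs_le.1 (z1 i)
    rw [abs_le]; constructor <;> linarith)
  have hpt : Continuous fun p : ℝ × ℝ => pt p.1 p.2 := pt_continuous (by fun_prop) (by fun_prop)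
  have := (hpt.tendsto (ρ 0, ρ 1)).comp (t0.prodMk_nhds t1)
  rw [show ρ = pt (ρ 0) (ρ 1) from E2_ext rfl rfl]
  refine this.congr fun i => ?_
  apply E2_ext <;> simp

/-- **The Misiurewicz–Ziemian family at `α = β = ½`.**
`F_*` is a lift of a torus homeomorphism homotopic to the identity, the four
indicated points are 2-periodic with rotation vectors
`(0,½), (½,0), (0,-½), (-½,0) ∈ ρ(F_*)`, and by convexity the square
`Q = {(x,y) : |x| + |y| ≤ ½}` is contained in `ρ(F_*)`. -/
theorem misiurewicz_ziemian_family_half :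
    IsHomeomorph Fstar ∧
    (∀ z : E 2, ∀ m ∈ ZLat 2, Fstar (z + m) = Fstar z + m) ∧
    (∃ f : T 2 ≃ₜ T 2, ∀ z : E 2, tpi 2 (Fstar z) = f (tpi 2 z)) ∧
    Fstar^[2] (pt (1 / 4) 0) = pt (1 / 4) 0 + pt 0 1 ∧
    Fstar^[2] (pt 0 (1 / 4)) = pt 0 (1 / 4) + pt 1 0 ∧
    Fstar^[2] (pt (3 / 4) 0) = pt (3 / 4) 0 + pt 0 (-1) ∧
    Fstar^[2] (pt 0 (3 / 4)) = pt 0 (3 / 4) + pt (-1) 0 ∧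
    pt 0 (1 / 2) ∈ rotSet Fstar ∧ pt (1 / 2) 0 ∈ rotSet Fstar ∧
    pt 0 (-(1 / 2)) ∈ rotSet Fstar ∧ pt (-(1 / 2)) 0 ∈ rotSet Fstar ∧
    {z : E 2 | |z 0| + |z 1| ≤ 1 / 2} ⊆ rotSet Fstar := by
  refine ⟨FstarHomeo.isHomeomorph, Fstar_add, ⟨fstarHomeo, fun z => rfl⟩, per1, per2, per3, per4,
    ?_, ?_, ?_, ?_, square_subset⟩
  all_goals
    apply square_subset
    simp only [mem_ofPred_eq, pt_zero, pt_one]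
    norm_num
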